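/- Let SP(τ) be the set of pairs (θ,{δ}) where θ is a rooted subtree of τ sharing the root and δ is the single tree remaining when θ is removed from τ. Then for every nonempty colored rooted tree τ obtained by attaching a tree δ to a vertex of a tree θ, the combinatorial identity α(θ)·α(δ)·β(τ,θ,δ) = α(τ)·γ(τ,θ,{δ}) holds, where β(τ,θ,δ) counts the multiplicity of τ in the expansion of ∂F(θ)F(δ) as a sum of elementary differentials, and γ is the composition coefficient. -/

import Mathlib

inductive CTree (m : ℕ) : Type
  | node : Fin (m + 1) → List (CTree m) → CTree m

namespace CTree

variable {m : ℕ}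

def rho : CTree m → ℚ
  | .node l ts => (if (l : ℕ) = 0 then 1 else 1/2) + (ts.attach.map (fun t => rho t.1)).sum
decreasing_by
  all_goals try simp only [CTree.node.sizeOf_spec, List.cons.sizeOf_spec, List.nil.sizeOf_spec]
  all_goals try have := List.sizeOf_lt_of_mem t.2
  all_goals omega

def height : CTree m → ℕ
  | .node _ ts => 1 + (ts.attach.map (fun t => height t.1)).foldr max 0
decreasing_by
  all_goals try simp only [CTree.node.sizeOf_spec, List.cons.sizeOf_spec, List.nil.sizeOf_spec]
  all_goals try have := List.sizeOf_lt_of_mem t.2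
  all_goals omega

def ram : CTree m → ℕ
  | .node _ [] => 1
  | .node _ [t] => ram t
  | .node _ ts => 1 + (ts.attach.map (fun t => ram t.1)).foldr max 0
decreasing_by
  all_goals try simp only [CTree.node.sizeOf_spec, List.cons.sizeOf_spec, List.nil.sizeOf_spec]
  all_goals try have := List.sizeOf_lt_of_mem t.2
  all_goals omega

def dbl : CTree m → ℕ
  | .node _ [] => 1
  | .node _ ts =>
      let ds := ts.attach.map (fun t => dbl t.1)
      let M := ds.foldr max 0
      if 2 ≤ ds.count M then M + 1 else M
decreasing_by
  all_goals try simp only [CTree.node.sizeOf_spec, List.cons.sizeOf_spec, List.nil.sizeOf_spec]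
  all_goals try have := List.sizeOf_lt_of_mem t.2
  all_goals omega


mutual
/-- equality of colored rooted trees as unordered trees -/
def eqv : CTree m → CTree m → Bool
  | .node l ts, .node l' ts' => l == l' && bagEqv ts ts'
termination_by a b => (sizeOf a, 0)

/-- multiset equality of lists of trees, up to `eqv` -/
def bagEqv : List (CTree m) → List (CTree m) → Bool
  | [], us => us.isEmpty
  | t :: ts, us => (pickEqv t us).elim false (fun rest => bagEqv ts rest)
termination_by ts _ => (sizeOf ts, 0)

/-- remove one element `eqv` to `t` from the list, if possible -/
def pickEqv (t : CTree m) : List (CTree m) → Option (List (CTree m))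
  | [] => none
  | u :: us => if eqv t u then some us else (pickEqv t us).map (u :: ·)
termination_by us => (sizeOf t, sizeOf us)
end


/-- symmetry factor ∏ rᵢ! of a list of trees, where rᵢ are the multiplicities of
the distinct (as unordered trees) elements -/
def symFact : List (CTree m) → ℕ
  | [] => 1
  | t :: ts => (1 + (ts.filter (fun u => eqv t u)).length) * symFact ts

/-- the coefficient α of B--series -/
def alpha : CTree m → ℚ
  | .node _ ts => ((symFact ts : ℚ))⁻¹ * (ts.attach.map (fun t => alpha t.1)).prod
decreasing_by
  all_goals try simp only [CTree.node.sizeOf_spec, List.cons.sizeOf_spec, List.nil.sizeOf_spec]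
  all_goals try have := List.sizeOf_lt_of_mem t.2
  all_goals omega

/-- the order of the automorphism group of a rooted colored tree
(root-fixing, color-preserving): the product over all vertices of the factorials of the
multiplicities of the isomorphism classes of the subtrees hanging off that vertex -/
def autCard : CTree m → ℕ
  | .node _ ts => symFact ts * (ts.attach.map (fun t => autCard t.1)).prod
decreasing_by
  all_goals try simp only [CTree.node.sizeOf_spec, List.cons.sizeOf_spec, List.nil.sizeOf_spec]
  all_goals try have := List.sizeOf_lt_of_mem t.2
  all_goals omega

/-- All ordered splittings of a tree `τ` into a root-sharing subtree `θ` (`none` = empty tree)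
together with the list of remainder trees `ω` left over when `θ` is removed from `τ`. -/
def split : CTree m → List (Option (CTree m) × List (CTree m))
  | .node l ts =>
    (none, [.node l ts]) ::
    ((ts.attach.map (fun t => split t.1)).sections.map
      (fun cs => (some (.node l (cs.filterMap Prod.fst)), (cs.map Prod.snd).flatten)))
decreasing_by
  all_goals try simp only [CTree.node.sizeOf_spec, List.cons.sizeOf_spec, List.nil.sizeOf_spec]
  all_goals try have := List.sizeOf_lt_of_mem t.2
  all_goals omega

/-- Composition of B--series coefficient maps: `comp φx φy` is the coefficient map of
`B(φy, B(φx, x₀; h); h)`.  Coefficient maps are defined on `Option (CTree m)`,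
with `none` playing the role of the empty tree ∅. -/
def comp {R : Type*} [CommRing R] (φx φy : Option (CTree m) → R) : Option (CTree m) → R
  | none => φy none
  | some τ => ((split τ).map (fun p => φy p.1 * (p.2.map (fun δ => φx (some δ))).prod)).sum

/-- The bilinear operation `∗`: sum over splittings with exactly one remainder tree. -/
def star {R : Type*} [CommRing R] (φx φy : Option (CTree m) → R) (τ : CTree m) : R :=
  (((split τ).filter (fun p => p.2.length == 1)).map
    (fun p => φy p.1 * (p.2.map (fun δ => φx (some δ))).prod)).sum


mutual
/-- all trees obtained by attaching δ as an extra child of some vertex of the tree -/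
def attachT (δ : CTree m) : CTree m → List (CTree m)
  | .node l ts => .node l (δ :: ts) :: (attachL δ ts).map (fun ts' => .node l ts')
termination_by t => sizeOf t

/-- all lists obtained from `ts` by attaching δ at some vertex of some element -/
def attachL (δ : CTree m) : List (CTree m) → List (List (CTree m))
  | [] => []
  | t :: ts => ((attachT δ t).map (· :: ts)) ++ (attachL δ ts).map (t :: ·)
termination_by ts => sizeOf ts
end

/-- β(τ,θ,δ): the multiplicity of τ in the expansion of ∂F(θ)F(δ), i.e. the number of ways
to attach δ to a vertex of θ so as to obtain (a tree isomorphic to) τ -/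
def betaC (τ θ δ : CTree m) : ℕ :=
  ((attachT δ θ).filter (fun σ => eqv σ τ)).length

/-- γ(τ,θ,{δ}): the composition coefficient, i.e. the number of ordered splittings of τ into
the root-sharing subtree θ with single remainder tree δ -/
def gammaC (τ θ δ : CTree m) : ℕ :=
  ((split τ).filter (fun p =>
      match p.1, p.2 with
      | some θ', [δ'] => eqv θ' θ && eqv δ' δ
      | _, _ => false)).length

end CTree



namespace CTree

theorem ind {m : ℕ} {P : CTree m → Prop}
    (h : ∀ l ts, (∀ t ∈ ts, P t) → P (.node l ts)) : ∀ t, P t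
  | .node l ts => h l ts (fun t _ => ind h t)
decreasing_by
  all_goals simp only [CTree.node.sizeOf_spec]
  all_goals have := List.sizeOf_lt_of_mem ‹_ ∈ ts›
  all_goals omega

def code {m : ℕ} : CTree m → ℕ
  | .node l ts => Nat.pair l (Encodable.encode ((ts.attach.map (fun t => code t.1) : List ℕ) : Multiset ℕ))
decreasing_by
  all_goals try simp only [CTree.node.sizeOf_spec, List.cons.sizeOf_spec, List.nil.sizeOf_spec]
  all_goals try have := List.sizeOf_lt_of_mem t.2
  all_goals omega

theorem code_node_eq {m : ℕ} (l l' : Fin (m+1)) (ts us : List (CTree m)) :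
    code (.node l ts) = code (.node l' us) ↔ l = l' ∧ (ts.map code).Perm (us.map code) := by
  rw [code, code, Nat.pair_eq_pair, Encodable.encode_inj, Multiset.coe_eq_coe, Fin.val_inj]
  simp

theorem pick_spec {m : ℕ} (t : CTree m) (ht : ∀ b, eqv t b = true ↔ code t = code b) :
    ∀ us : List (CTree m),
      (pickEqv t us = none ∧ code t ∉ us.map code) ∨
      (∃ r, pickEqv t us = some r ∧ (us.map code).Perm (code t :: r.map code))
  | [] => by left; simp [pickEqv]
  | u :: us => by
    rw [pickEqv]
    by_cases hu : eqv t u = true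
    · right
      refine ⟨us, by simp [hu], ?_⟩
      rw [List.map_cons, (ht u).1 hu]
    · have hc : code t ≠ code u := fun h => hu ((ht u).2 h)
      rcases pick_spec t ht us with ⟨h1, h2⟩ | ⟨r, h1, h2⟩
      · left
        simp only [hu, h1]
        refine ⟨by simp, ?_⟩
        rw [List.map_cons, List.mem_cons]
        rintro (h | h)
        · exact hc h
        · exact h2 h
      · right
        refine ⟨u :: r, by simp [hu, h1], ?_⟩
        rw [List.map_cons, List.map_cons]
        exact (h2.cons _).trans (List.Perm.swap _ _ _)

theorem bag_spec {m : ℕ} : ∀ ts : List (CTree m),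
    (∀ t ∈ ts, ∀ b, eqv t b = true ↔ code t = code b) →
    ∀ us, bagEqv ts us = true ↔ (ts.map code).Perm (us.map code)
  | [], _, us => by
    rw [bagEqv]; cases us <;> simp
  | t :: ts, h, us => by
    rw [bagEqv]
    have ih := bag_spec ts (fun t ht => h t (by simp [ht]))
    rcases pick_spec t (h t (by simp)) us with ⟨h1, h2⟩ | ⟨r, h1, h2⟩
    · rw [h1]
      simp only [Option.elim]
      constructor
      · intro h; simp at h
      · intro h
        exact absurd (h.subset (by simp)) h2
    · rw [h1]
      simp only [Option.elim]
      rw [ih r, List.map_cons]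
      constructor
      · intro h; exact (h.cons _).trans h2.symm
      · intro h; exact (List.perm_cons _).1 (h.trans h2)

theorem eqv_iff {m : ℕ} : ∀ a b : CTree m, eqv a b = true ↔ code a = code b := by
  intro a
  induction a using ind with
  | h l ts ih =>
    rintro ⟨l', us⟩
    rw [eqv, code_node_eq, Bool.and_eq_true, bag_spec ts ih us, beq_iff_eq]

def sf : List ℕ → ℕ
  | [] => 1
  | c :: cs => (1 + cs.count c) * sf cs

theorem sf_perm {a b : List ℕ} (h : a.Perm b) : sf a = sf b := by
  induction h with
  | nil => rfl
  | cons x h ih => rw [sf, sf, ih, h.count_eq]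
  | swap x y l =>
    simp only [sf, List.count_cons]
    by_cases h : x = y
    · subst h; rfl
    · have h' : y ≠ x := fun e => h e.symm
      simp [h, h']; ring
  | trans _ _ h1 h2 => exact h1.trans h2

theorem symFact_eq {m : ℕ} : ∀ ts : List (CTree m), symFact ts = sf (ts.map code)
  | [] => rfl
  | t :: ts => by
    rw [symFact, List.map_cons, sf, symFact_eq ts]
    congr 2
    rw [List.count_eq_countP, List.countP_map, List.countP_eq_length_filter]
    congr 2
    funext u
    rw [Bool.eq_iff_iff, eqv_iff]
    simp only [Function.comp, beq_iff_eq]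
    exact eq_comm

theorem sf_pos : ∀ l, 0 < sf l
  | [] => by simp [sf]
  | c :: cs => by rw [sf]; exact Nat.mul_pos (by omega) (sf_pos cs)

/-- reciprocal of alpha -/
noncomputable def A {m : ℕ} (t : CTree m) : ℚ := (alpha t)⁻¹

theorem A_node {m : ℕ} (l : Fin (m+1)) (ts : List (CTree m)) :
    A (.node l ts) = (sf (ts.map code) : ℚ) * (ts.map A).prod := by
  unfold A
  rw [alpha, symFact_eq, mul_inv, inv_inv]
  congr 1
  simp only [List.map_attach_eq_pmap, List.pmap_eq_map]
  induction ts with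
  | nil => simp
  | cons t ts ih => simp [mul_inv, ih, mul_comm]

theorem A_ne {m : ℕ} (t : CTree m) : A t ≠ 0 := by
  induction t using ind with
  | h l ts ih =>
    rw [A_node]
    refine mul_ne_zero (by exact_mod_cast (sf_pos _).ne') ?_
    intro h
    rw [List.prod_eq_zero_iff, List.mem_map] at h
    obtain ⟨t, h1, h2⟩ := h
    exact ih t h1 h2

theorem prodA_perm {m : ℕ} : ∀ ts : List (CTree m),
    (∀ t ∈ ts, ∀ b : CTree m, code t = code b → A t = A b) →
    ∀ us : List (CTree m), (ts.map code).Perm (us.map code) → (ts.map A).prod = (us.map A).prod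
  | [], _, us, h => by
    have : us = [] := by simpa using h
    simp [this]
  | t :: ts, h, us, hp => by
    have hm : code t ∈ us.map code := hp.subset (by simp)
    obtain ⟨u, hu, hc⟩ := List.mem_map.1 hm
    obtain ⟨s, r, rfl⟩ := List.append_of_mem hu
    have hp' : (ts.map code).Perm ((s ++ r).map code) := by
      have h2 : ((s ++ u :: r).map code).Perm (code t :: (s ++ r).map code) := by
        rw [← hc, ← List.map_cons]
        exact List.perm_middle.map _
      exact (List.perm_cons _).1 (hp.trans h2)
    have := prodA_perm ts (fun t ht => h t (by simp [ht])) _ hp'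
    simp only [List.map_cons, List.prod_cons, this, List.map_append, List.prod_append,
      h t (by simp) u hc.symm]
    ring

theorem A_congr {m : ℕ} : ∀ a b : CTree m, code a = code b → A a = A b := by
  intro a
  induction a using ind with
  | h l ts ih =>
    rintro ⟨l', us⟩ h
    rw [code_node_eq] at h
    rw [A_node, A_node, sf_perm h.2, prodA_perm ts ih us h.2]

open Classical in
noncomputable def N {m : ℕ} (a b : CTree m) : ℚ := if code a = code b then A a else 0

open Classical in
noncomputable def PP {m : ℕ} (ts us : List (CTree m)) : ℚ :=
  if (ts.map code).Perm (us.map code) then (sf (ts.map code) : ℚ) * (ts.map A).prod else 0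

theorem N_node {m : ℕ} (l l' : Fin (m+1)) (ts us : List (CTree m)) :
    N (.node l ts) (.node l' us) = if l = l' then PP ts us else 0 := by
  unfold N PP
  simp only [code_node_eq, A_node]
  split_ifs <;> simp_all

def picks {α : Type*} : List α → List (α × List α)
  | [] => []
  | u :: us => (u, us) :: (picks us).map (fun p => (p.1, u :: p.2))

theorem picks_perm {α : Type*} : ∀ us : List α, ∀ p ∈ picks us, us.Perm (p.1 :: p.2)
  | [], p, h => by simp [picks] at h
  | u :: us, p, h => by
    rw [picks, List.mem_cons, List.mem_map] at h
    rcases h with rfl | ⟨q, hq, rfl⟩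
    · exact List.Perm.refl _
    · exact ((picks_perm us q hq).cons _).trans (List.Perm.swap _ _ _)

theorem picks_fst {α : Type*} : ∀ us : List α, (picks us).map Prod.fst = us
  | [] => rfl
  | u :: us => by
    rw [picks]
    simp only [List.map_cons, List.map_map]
    congr 1
    exact picks_fst us

theorem count_sum (c : ℕ) (C : ℚ) : ∀ l : List ℕ,
    (l.map (fun v => if c = v then C else 0)).sum = (l.count c : ℚ) * C
  | [] => by simp
  | v :: l => by
    rw [List.map_cons, List.sum_cons, count_sum c C l, List.count_cons]
    by_cases h : c = v
    · simp [h]; ring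
    · have h' : v ≠ c := fun e => h e.symm
      simp [h, h']

theorem PP_cons {m : ℕ} (t : CTree m) (ts us : List (CTree m)) :
    PP (t :: ts) us = ((picks us).map (fun p => N t p.1 * PP ts p.2)).sum := by
  classical
  let C : ℚ := if ((t :: ts).map code).Perm (us.map code) then
    A t * ((sf (ts.map code) : ℚ) * (ts.map A).prod) else 0
  have h1 : (picks us).map (fun p => N t p.1 * PP ts p.2)
      = (us.map code).map (fun v => if code t = v then C else 0) := by
    conv_rhs => rw [← picks_fst us]
    rw [List.map_map, List.map_map]
    apply List.map_congr_left
    intro p hp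
    have hperm := (picks_perm us p hp).map code
    simp only [Function.comp, N, PP, C]
    by_cases hc : code t = code p.1
    · have : ((t :: ts).map code).Perm (us.map code) ↔ (ts.map code).Perm (p.2.map code) := by
        rw [List.map_cons, hc]
        rw [List.map_cons] at hperm
        exact ⟨fun h => (List.perm_cons _).1 (h.trans hperm),
          fun h => (h.cons _).trans hperm.symm⟩
      simp only [this, hc, if_true]
      split_ifs <;> simp
    · simp [hc]
  rw [h1, count_sum]
  simp only [PP, C]
  split_ifs with h
  · rw [← h.count_eq]
    simp only [List.map_cons, List.count_cons_self, sf, List.prod_cons]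
    push_cast
    ring
  · simp

mutual
def cutT {m : ℕ} : CTree m → List (CTree m × CTree m)
  | .node l us => (picks us).map (fun p => (.node l p.2, p.1)) ++
      (cutL us).map (fun p => (.node l p.1, p.2))
termination_by t => sizeOf t
def cutL {m : ℕ} : List (CTree m) → List (List (CTree m) × CTree m)
  | [] => []
  | u :: us => (cutT u).map (fun p => (p.1 :: us, p.2)) ++ (cutL us).map (fun p => (u :: p.1, p.2))
termination_by ts => sizeOf ts
end

theorem sum_swap {α β : Type*} (f : α → β → ℚ) (l' : List β) : ∀ l : List α,
    (l.map (fun a => (l'.map (fun b => f a b)).sum)).sum =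
    (l'.map (fun b => (l.map (fun a => f a b)).sum)).sum
  | [] => by simp
  | a :: l => by
    simp only [List.map_cons, List.sum_cons, List.sum_map_add, sum_swap f l' l]

theorem cutL_picks {m : ℕ} : ∀ (us : List (CTree m)) (f : CTree m → List (CTree m) → CTree m → ℚ),
    ((cutL us).map (fun q => ((picks q.1).map (fun p => f p.1 p.2 q.2)).sum)).sum =
    ((picks us).map (fun p => ((cutT p.1).map (fun q => f q.1 p.2 q.2)).sum +
        ((cutL p.2).map (fun q => f p.1 q.1 q.2)).sum)).sum
  | [], f => by simp [cutL, picks]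
  | u :: us, f => by
    have ih := cutL_picks us (fun v r d => f v (u :: r) d)
    simp only [cutL, picks, List.map_append, List.sum_append, List.map_cons, List.sum_cons,
      List.map_map, Function.comp_def, List.sum_map_add] at ih ⊢
    rw [ih, sum_swap (fun (i : CTree m × CTree m) (x : CTree m × List (CTree m)) =>
      f x.1 (i.1 :: x.2) i.2)]
    ring

theorem PP_nil_cons {m : ℕ} (v : CTree m) (us : List (CTree m)) : PP [] (v :: us) = 0 := by
  simp [PP]

theorem mainL {m : ℕ} (δ : CTree m) : ∀ ts : List (CTree m),
    (∀ t ∈ ts, ∀ τ, ((attachT δ t).map (fun σ => N σ τ)).sum =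
      ((cutT τ).map (fun q => N t q.1 * N δ q.2)).sum) →
    ∀ us, ((attachL δ ts).map (fun L => PP L us)).sum =
      ((cutL us).map (fun q => PP ts q.1 * N δ q.2)).sum
  | [], _, us => by
    cases us <;> simp [attachL, cutL, PP_nil_cons, Function.comp_def]
  | t :: ts, h, us => by
    have ih := mainL δ ts (fun t ht => h t (by simp [ht]))
    have ht := h t (by simp)
    have key := cutL_picks us (fun v r d => N t v * PP ts r * N δ d)
    simp only [attachL, List.map_append, List.sum_append, List.map_map, Function.comp_def,
      PP_cons]
    rw [sum_swap, sum_swap (fun (L : List (CTree m)) (p : CTree m × List (CTree m)) =>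
      N t p.1 * PP L p.2)]
    simp only [← List.sum_map_mul_right, List.sum_map_mul_left] at key ⊢
    simp only [List.sum_map_mul_right, ht, ih] at key ⊢
    simp only [← List.sum_map_mul_right, ← List.sum_map_mul_left, List.sum_map_add] at key ⊢
    rw [key]
    congr 3
    · funext p; congr 2; funext q; ring
    · funext p; congr 2; funext q; ring

theorem mainT {m : ℕ} (δ θ : CTree m) : ∀ τ, ((attachT δ θ).map (fun σ => N σ τ)).sum =
      ((cutT τ).map (fun q => N θ q.1 * N δ q.2)).sum := by
  induction θ using ind with
  | h l ts ih =>
    rintro ⟨l', us⟩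
    have := mainL δ ts ih us
    simp only [attachT, cutT, List.map_cons, List.sum_cons, List.map_append, List.sum_append,
      List.map_map, Function.comp_def, N_node]
    by_cases hl : l = l'
    · simp only [hl, if_true, this, PP_cons]
      congr 3
      funext p; ring
    · simp [hl]

theorem splitL {m : ℕ} : ∀ ts : List (CTree m),
    (∀ t ∈ ts, ∀ h : Option (CTree m) → List (CTree m) → ℚ,
      (∀ x d, 2 ≤ d.length → h x d = 0) →
      ((split t).map (fun p => h p.1 p.2)).sum =
        h (some t) [] + h none [t] + ((cutT t).map (fun q => h (some q.1) [q.2])).sum) →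
    ∀ g : List (CTree m) → List (CTree m) → ℚ, (∀ x d, 2 ≤ d.length → g x d = 0) →
      ((ts.map split).sections.map
        (fun cs => g (cs.filterMap Prod.fst) ((cs.map Prod.snd).flatten))).sum =
      g ts [] + ((picks ts).map (fun p => g p.2 [p.1])).sum +
        ((cutL ts).map (fun q => g q.1 [q.2])).sum
  | [], _, g, hg => by simp [picks, cutL]
  | t :: ts, h, g, hg => by
    have ih := splitL ts (fun t ht => h t (by simp [ht]))
    have ht := h t (by simp)
    have e : (((t :: ts).map split).sections.map
        (fun cs => g (cs.filterMap Prod.fst) ((cs.map Prod.snd).flatten))).sum =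
        ((split t).map (fun p => ((ts.map split).sections.map
          (fun cs => g (p.1.toList ++ cs.filterMap Prod.fst)
            (p.2 ++ (cs.map Prod.snd).flatten))).sum)).sum := by
      rw [← sum_swap]
      simp only [List.map_cons, List.sections, List.map_flatMap, List.map_map, Function.comp_def]
      rw [List.flatMap_def, List.sum_flatten, List.map_map]
      congr 2
      funext cs
      simp only [Function.comp_def]
      congr 2
      funext p
      rcases p with ⟨_ | x, d⟩ <;> simp
    rw [e]
    have e2 : ∀ p : Option (CTree m) × List (CTree m), ((ts.map split).sections.map
          (fun cs => g (p.1.toList ++ cs.filterMap Prod.fst)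
            (p.2 ++ (cs.map Prod.snd).flatten))).sum = _ := fun p =>
      ih (fun x d => g (p.1.toList ++ x) (p.2 ++ d))
        (fun x d hd => hg _ _ (by rw [List.length_append]; omega))
    simp only [e2]
    rw [ht (fun x d => g (x.toList ++ ts) (d ++ []) +
      ((picks ts).map (fun p => g (x.toList ++ p.2) (d ++ [p.1]))).sum +
        ((cutL ts).map (fun q => g (x.toList ++ q.1) (d ++ [q.2]))).sum)]
    · have z : ∀ x a b, g x [a, b] = 0 := fun x a b => hg _ _ (by simp)
      simp [picks, cutL, z, Function.comp_def]
      ring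
    · intro x d hd
      have z : ∀ x e, g x (d ++ e) = 0 := fun x e => hg _ _ (by rw [List.length_append]; omega)
      simp only [z]
      simp

theorem splitT {m : ℕ} (t : CTree m) : ∀ h : Option (CTree m) → List (CTree m) → ℚ,
      (∀ x d, 2 ≤ d.length → h x d = 0) →
      ((split t).map (fun p => h p.1 p.2)).sum =
        h (some t) [] + h none [t] + ((cutT t).map (fun q => h (some q.1) [q.2])).sum := by
  induction t using ind with
  | h l ts ih =>
    intro h hh
    have := splitL ts ih (fun x d => h (some (.node l x)) d) (fun x d hd => hh _ _ hd)
    have e : ts.attach.map (fun t => split t.1) = ts.map split := by simp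
    simp only [split, cutT, e, List.map_cons, List.sum_cons, List.map_map, Function.comp_def,
      this, List.map_append, List.sum_append]
    ring

theorem len_filter {α : Type*} (p : α → Bool) : ∀ l : List α,
    ((l.filter p).length : ℚ) = (l.map (fun x => if p x = true then (1:ℚ) else 0)).sum
  | [] => by simp
  | a :: l => by
    rw [List.map_cons, List.sum_cons, ← len_filter p l, List.filter_cons]
    split_ifs
    · push_cast [List.length_cons]; ring
    · simp

theorem beta_sum {m : ℕ} (τ θ δ : CTree m) :
    (betaC τ θ δ : ℚ) * A τ = ((attachT δ θ).map (fun σ => N σ τ)).sum := by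
  unfold betaC
  rw [len_filter, ← List.sum_map_mul_right]
  congr 2
  funext σ
  simp only [eqv_iff, N]
  by_cases h : code σ = code τ
  · simp [h, A_congr _ _ h]
  · simp [h]

def gw {m : ℕ} (θ δ : CTree m) (x : Option (CTree m)) (d : List (CTree m)) : ℚ :=
  if (match x, d with
      | some θ', [δ'] => eqv θ' θ && eqv δ' δ
      | _, _ => false) = true then 1 else 0

theorem gamma_sum {m : ℕ} (τ θ δ : CTree m) :
    (gammaC τ θ δ : ℚ) * (A θ * A δ) = ((cutT τ).map (fun q => N θ q.1 * N δ q.2)).sum := by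
  have h := splitT τ (gw θ δ) (by
    intro x d hd
    rcases x with _ | x <;> rcases d with _ | ⟨a, _ | ⟨b, d⟩⟩ <;> simp [gw] at hd ⊢)
  have e : (gammaC τ θ δ : ℚ) = ((split τ).map (fun p => gw θ δ p.1 p.2)).sum := by
    unfold gammaC
    rw [len_filter]
    rfl
  rw [e, h]
  have z1 : gw θ δ (some τ) [] = 0 := by simp [gw]
  have z2 : gw θ δ none [τ] = 0 := by simp [gw]
  rw [z1, z2, zero_add, zero_add, ← List.sum_map_mul_right]
  congr 2
  funext q
  simp only [gw, Bool.and_eq_true, eqv_iff, N, eq_comm (a := code q.1), eq_comm (a := code q.2)]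
  by_cases h1 : code θ = code q.1 <;> by_cases h2 : code δ = code q.2 <;> simp [h1, h2]

end CTree

open CTree in
theorem stmt15 (m : ℕ) (τ θ δ : CTree m)
    (h : ∃ τ' ∈ attachT δ θ, eqv τ' τ = true) :
    alpha θ * alpha δ * (betaC τ θ δ : ℚ) = alpha τ * (gammaC τ θ δ : ℚ) := by
  have e := (beta_sum τ θ δ).trans ((mainT δ θ τ).trans (gamma_sum τ θ δ).symm)
  have h1 := A_ne τ
  have h2 := A_ne θ
  have h3 := A_ne δ
  unfold A at e h1 h2 h3
  have k1 : alpha τ ≠ 0 := fun h => h1 (by simp [h])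
  have k2 : alpha θ ≠ 0 := fun h => h2 (by simp [h])
  have k3 : alpha δ ≠ 0 := fun h => h3 (by simp [h])
  field_simp at e
  linarith
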